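/- arXiv:math/0102051 — 2 statements merged into one kernel-verified Lean document; each statement's English description precedes it below -/
import Mathlib

section
/- For every n ≥ 1 and every partition α of n with cycle type not of the form (d^m) (all parts equal), the signed sum Σ_{σ ∈ U_n, cycle type(σ) = α} (-1)^{des(σ)} equals 0, where des(σ) is the number of descents of σ. If α = (d^m) with dm = n, this sum equals μ(d). -/
/-- A permutation of `Fin n` is unimodal if it strictly increases up to some
position `m` and strictly decreases afterwards. -/
def Unimodal {n : ℕ} (σ : Equiv.Perm (Fin n)) : Prop :=
  ∃ m : Fin n, StrictMonoOn σ {i | i ≤ m} ∧ StrictAntiOn σ {i | m ≤ i}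

/-- The descent set: positions `i` (0-indexed, with `i+1 < n`) with `σ i > σ (i+1)`. -/
def descents {n : ℕ} (σ : Equiv.Perm (Fin n)) : Finset (Fin n) :=
  Finset.univ.filter (fun i => ∃ j : Fin n, (j : ℕ) = (i : ℕ) + 1 ∧ σ j < σ i)

/-- The number of descents. -/
def desNum {n : ℕ} (σ : Equiv.Perm (Fin n)) : ℕ := (descents σ).card

/-- The full cycle type of a permutation of `Fin n`, including fixed points
as parts equal to `1`. -/
def fullCycleType {n : ℕ} (σ : Equiv.Perm (Fin n)) : Multiset ℕ :=
  σ.cycleType + Multiset.replicate (n - σ.support.card) 1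


/-! ### Block rotations -/

/-- The place map exchanging the adjacent blocks `[a,b)` and `[b,c)`. -/
def rotFun (a b c i : ℕ) : ℕ :=
  if i < a then i else if i < a + (c - b) then i + (b - a)
  else if i < c then i - (c - b) else i

theorem rotFun_lt {n a b c i : ℕ} (h : a ≤ b ∧ b ≤ c ∧ c ≤ n) (hi : i < n) :
    rotFun a b c i < n := by
  unfold rotFun; split_ifs <;> omega

theorem rotFun_inv {a b c i : ℕ} (h : a ≤ b ∧ b ≤ c) :
    rotFun a b c (rotFun a (a + c - b) c i) = i := by
  unfold rotFun; split_ifs <;> omega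

theorem rotFun_inv' {a b c i : ℕ} (h : a ≤ b ∧ b ≤ c) :
    rotFun a (a + c - b) c (rotFun a b c i) = i := by
  unfold rotFun; split_ifs <;> omega

/-- The block rotation as a permutation of `Fin n`. -/
def rot (n a b c : ℕ) : Equiv.Perm (Fin n) :=
  if h : a ≤ b ∧ b ≤ c ∧ c ≤ n then
    { toFun := fun i => ⟨rotFun a b c i, rotFun_lt h i.2⟩
      invFun := fun i => ⟨rotFun a (a + c - b) c i, rotFun_lt (by omega) i.2⟩
      left_inv := fun i => Fin.ext (rotFun_inv' ⟨h.1, h.2.1⟩)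
      right_inv := fun i => Fin.ext (rotFun_inv ⟨h.1, h.2.1⟩) }
  else 1

theorem rot_val {n a b c : ℕ} (h1 : a ≤ b) (h2 : b ≤ c) (h3 : c ≤ n) (i : Fin n) :
    ((rot n a b c i : Fin n) : ℕ) = rotFun a b c i := by
  unfold rot; rw [dif_pos ⟨h1, h2, h3⟩]; rfl

set_option maxHeartbeats 2000000 in
theorem rot_shift {n a b x y z : ℕ} (hb : b ≤ n) (h1 : a ≤ x) (h2 : x ≤ y) (h3 : y ≤ z)
    (h4 : z + 1 ≤ b) :
    rot n (x + 1) (y + 1) (z + 1) * rot n a (a + 1) b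
      = rot n a (a + 1) b * rot n x y z := by
  ext i
  rw [Equiv.Perm.mul_apply, Equiv.Perm.mul_apply, rot_val (by omega) (by omega) (by omega),
    rot_val (by omega) (by omega) (by omega), rot_val (by omega) (by omega) (by omega),
    rot_val (by omega) (by omega) (by omega)]
  unfold rotFun; split_ifs <;> omega

set_option maxHeartbeats 2000000 in
theorem rot_comm {n x y z x' y' z' : ℕ} (h1 : x ≤ y) (h2 : y ≤ z) (h3 : z ≤ x')
    (h4 : x' ≤ y') (h5 : y' ≤ z') (h6 : z' ≤ n) :
    rot n x y z * rot n x' y' z' = rot n x' y' z' * rot n x y z := by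
  ext i
  rw [Equiv.Perm.mul_apply, Equiv.Perm.mul_apply, rot_val (by omega) (by omega) (by omega),
    rot_val (by omega) (by omega) (by omega), rot_val (by omega) (by omega) (by omega),
    rot_val (by omega) (by omega) (by omega)]
  unfold rotFun; split_ifs <;> omega

theorem rot_j1 {n a b c : ℕ} (h1 : a < b) (h2 : b ≤ c) (h3 : c ≤ n) :
    rot n a (a + 1) b * rot n (b - 1) b c = rot n a (a + 1) c := by
  ext i
  rw [Equiv.Perm.mul_apply, rot_val (by omega) (by omega) (by omega),
    rot_val (by omega) (by omega) (by omega), rot_val (by omega) (by omega) (by omega)]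
  unfold rotFun; split_ifs <;> omega

theorem rot_j2 {n a b c : ℕ} (h1 : a < b) (h2 : b ≤ c) (h3 : c ≤ n) :
    rot n a (a + 1) b * rot n a (b - 1) c = rot n (a + 1) b c := by
  ext i
  rw [Equiv.Perm.mul_apply, rot_val (by omega) (by omega) (by omega),
    rot_val (by omega) (by omega) (by omega), rot_val (by omega) (by omega) (by omega)]
  unfold rotFun; split_ifs <;> omega

theorem rot_j3 {n a b c : ℕ} (h1 : a < b) (h2 : b ≤ c) (h3 : c ≤ n) :
    rot n a (a + 1) c * rot n a (b - 1) c = rot n a b c := by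
  ext i
  rw [Equiv.Perm.mul_apply, rot_val (by omega) (by omega) (by omega),
    rot_val (by omega) (by omega) (by omega), rot_val (by omega) (by omega) (by omega)]
  unfold rotFun; split_ifs <;> omega

theorem rot_j4 {n a b c : ℕ} (h1 : a < b) (h2 : b ≤ c) (h3 : c ≤ n) :
    rot n (a + 1) b c * rot n a (a + 1) c = rot n a (a + 1) b * rot n a b c := by
  ext i
  rw [Equiv.Perm.mul_apply, Equiv.Perm.mul_apply, rot_val (by omega) (by omega) (by omega),
    rot_val (by omega) (by omega) (by omega), rot_val (by omega) (by omega) (by omega),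
    rot_val (by omega) (by omega) (by omega)]
  unfold rotFun; split_ifs <;> omega

theorem rot_top {n a c : ℕ} (h1 : a ≤ c) (h3 : c ≤ n) : rot n a c c = 1 := by
  ext i
  rw [rot_val (by omega) (by omega) (by omega)]
  simp only [Equiv.Perm.one_apply]
  unfold rotFun; split_ifs <;> omega

theorem rot_bot {n a c : ℕ} (h1 : a ≤ c) (h3 : c ≤ n) : rot n a a c = 1 := by
  ext i
  rw [rot_val (by omega) (by omega) (by omega)]
  simp only [Equiv.Perm.one_apply]
  unfold rotFun; split_ifs <;> omega

/-- powers of the long rotation of a window -/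
theorem rot_pow {n a c : ℕ} (h1 : a < c) (h3 : c ≤ n) (j : ℕ) (hj : a + j ≤ c) :
    rot n a (a + 1) c ^ j = rot n a (a + j) c := by
  induction j with
  | zero => rw [pow_zero, Nat.add_zero, rot_bot h1.le h3]
  | succ j ih =>
    rw [pow_succ', ih (by omega)]
    have := rot_j3 (n := n) (a := a) (b := a + (j + 1)) (c := c) (by omega) hj h3
    rwa [show a + (j + 1) - 1 = a + j by omega] at this

/-- powers of the rotation moving the last letter of a window to the front -/
theorem rot_pow' {n a : ℕ} (h3 : a + 1 ≤ n) :
    rot n 0 a (a + 1) ^ (a + 1) = 1 := by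
  have h : rot n 0 a (a + 1) * rot n 0 1 (a + 1) = 1 := by
    ext i
    rw [Equiv.Perm.mul_apply, rot_val (by omega) (by omega) (by omega),
      rot_val (by omega) (by omega) (by omega)]
    simp only [Equiv.Perm.one_apply]
    unfold rotFun; split_ifs <;> omega
  have h2 := rot_pow (n := n) (a := 0) (c := a + 1) (by omega) h3 (a + 1) (by omega)
  rw [Nat.zero_add, Nat.zero_add, rot_top (by omega) h3] at h2
  rw [eq_inv_of_mul_eq_one_left h, inv_pow, h2, inv_one]

/-- `r_a = η_a γ`. -/
theorem rot_eta {n a : ℕ} (h : a < n) :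
    rot n a (a + 1) n = rot n 0 a (a + 1) * rot n 0 1 n := by
  ext i
  rw [Equiv.Perm.mul_apply, rot_val (by omega) (by omega) (by omega),
    rot_val (by omega) (by omega) (by omega), rot_val (by omega) (by omega) (by omega)]
  have := i.2
  unfold rotFun; split_ifs <;> omega

/-! ### The group algebra computation -/

noncomputable section

/-- the group algebra -/
abbrev GA (n : ℕ) := MonoidAlgebra ℂ (Equiv.Perm (Fin n))

/-- block rotation in the group algebra -/
def RR (n a b c : ℕ) : GA n := MonoidAlgebra.of ℂ _ (rot n a b c)

theorem RR_mul {n a b c a' b' c' : ℕ} :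
    RR n a b c * RR n a' b' c' = MonoidAlgebra.of ℂ _ (rot n a b c * rot n a' b' c') :=
  (map_mul _ _ _).symm

/-- nested brackets of the `l` letters at positions `a, …, a+l-1` with the block up to `c` -/
def SS (n : ℕ) : ℕ → ℕ → ℕ → GA n
  | _, 0, _ => 1
  | a, l + 1, c => SS n (a + 1) l c * (1 - RR n a (a + 1) c)

theorem SS_succ' (n : ℕ) (l a c : ℕ) :
    SS n a (l + 1) c = (1 - RR n (a + l) (a + l + 1) c) * SS n a l c := by
  induction l generalizing a with
  | zero => simp [SS]
  | succ l ih =>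
    rw [SS, ih, SS, mul_assoc, show a + 1 + l = a + (l + 1) by omega]

theorem SS_shift {n a b : ℕ} (hb : b ≤ n) (l x c : ℕ) (h1 : a ≤ x) (h2 : x + l ≤ c)
    (h3 : c + 1 ≤ b) :
    SS n (x + 1) l (c + 1) * RR n a (a + 1) b = RR n a (a + 1) b * SS n x l c := by
  induction l generalizing x with
  | zero => simp [SS]
  | succ l ih =>
    rw [SS, SS, mul_assoc, ← mul_assoc (RR n a (a + 1) b), ← ih (x + 1) (by omega) (by omega),
      mul_assoc]
    congr 1
    rw [sub_mul, mul_sub, one_mul, mul_one, RR_mul, RR_mul,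
      rot_shift hb h1 (by omega) (by omega) (by omega)]

theorem SS_comm {n : ℕ} {x' y' z' : ℕ} (h4 : x' ≤ y') (h5 : y' ≤ z') (h6 : z' ≤ n)
    (l x c : ℕ) (h2 : x + l ≤ c) (h3 : c ≤ x') :
    SS n x l c * RR n x' y' z' = RR n x' y' z' * SS n x l c := by
  induction l generalizing x with
  | zero => simp [SS]
  | succ l ih =>
    rw [SS, mul_assoc, ← mul_assoc (RR n x' y' z'), ← ih (x + 1) (by omega), mul_assoc]
    congr 1
    rw [sub_mul, mul_sub, one_mul, mul_one, RR_mul, RR_mul,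
      rot_comm (by omega) (by omega) h3 h4 h5 h6]

/-- the Jacobi identity in disguise -/
theorem SS_jacobi {n c : ℕ} (hc : c ≤ n) (l a : ℕ) (h : a + l + 1 ≤ c) :
    SS n a l (a + l + 1) * SS n a (l + 1) c
      = SS n a l (a + l + 1) * (1 - RR n a (a + l + 1) c) := by
  induction l generalizing a with
  | zero => simp [SS]
  | succ l ih =>
    have e1 : SS n a (l + 1) (a + (l + 1) + 1)
        = SS n (a + 1) l (a + l + 1 + 1) * (1 - RR n a (a + 1) (a + l + 1 + 1)) := rfl
    have ih1 := ih (a + 1) (by omega)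
    rw [show a + 1 + l + 1 = a + l + 1 + 1 by omega] at ih1
    have ih2 := ih a (by omega)
    have sh := SS_shift (n := n) (a := a) (b := a + l + 1 + 1) (by omega) l a (a + l + 1)
      le_rfl (by omega) le_rfl
    have cm := SS_comm (n := n) (x' := a + l + 1) (y' := a + l + 1 + 1) (z' := c) (by omega)
      (by omega) hc l a (a + l + 1) (by omega) le_rfl
    have f1 : SS n (a + 1) l (a + l + 1 + 1) * SS n a (l + 1 + 1) c
        = SS n (a + 1) l (a + l + 1 + 1) *
          ((1 - RR n (a + 1) (a + l + 1 + 1) c) * (1 - RR n a (a + 1) c)) := by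
      rw [SS, ← mul_assoc, ih1, mul_assoc]
    have f2 : SS n (a + 1) l (a + l + 1 + 1) * (RR n a (a + 1) (a + l + 1 + 1)
          * SS n a (l + 1 + 1) c)
        = SS n (a + 1) l (a + l + 1 + 1) * (RR n a (a + 1) (a + l + 1 + 1) *
          ((1 - RR n (a + l + 1) (a + l + 1 + 1) c) * (1 - RR n a (a + l + 1) c))) := by
      rw [← mul_assoc, sh, SS_succ', ← mul_assoc (SS n (a + 1) l _), sh]
      simp only [mul_assoc]
      congr 1
      rw [show a + (l + 1) = a + l + 1 by omega]
      have cm' : SS n a l (a + l + 1) * (1 - RR n (a + l + 1) (a + l + 1 + 1) c)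
          = (1 - RR n (a + l + 1) (a + l + 1 + 1) c) * SS n a l (a + l + 1) := by
        rw [mul_sub, sub_mul, cm, one_mul, mul_one]
      rw [← mul_assoc, cm', mul_assoc, ih2, ← mul_assoc, ← cm', mul_assoc]
    rw [e1, mul_assoc, sub_mul, one_mul, mul_sub, f1, f2, mul_assoc, ← mul_sub]
    congr 1
    have j1 := rot_j1 (n := n) (a := a) (b := a + l + 1 + 1) (c := c) (by omega) (by omega) hc
    have j2 := rot_j2 (n := n) (a := a) (b := a + l + 1 + 1) (c := c) (by omega) (by omega) hc
    have j3 := rot_j3 (n := n) (a := a) (b := a + l + 1 + 1) (c := c) (by omega) (by omega) hc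
    have j4 := rot_j4 (n := n) (a := a) (b := a + l + 1 + 1) (c := c) (by omega) (by omega) hc
    rw [Nat.add_sub_cancel] at j1 j2 j3
    have k1 : RR n a (a + 1) (a + l + 1 + 1) * RR n (a + l + 1) (a + l + 1 + 1) c
        = RR n a (a + 1) c := by rw [RR_mul, j1]; rfl
    have k2 : RR n a (a + 1) (a + l + 1 + 1) * RR n a (a + l + 1) c
        = RR n (a + 1) (a + l + 1 + 1) c := by rw [RR_mul, j2]; rfl
    have k3 : RR n a (a + 1) c * RR n a (a + l + 1) c = RR n a (a + l + 1 + 1) c := by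
      rw [RR_mul, j3]; rfl
    have k4 : RR n (a + 1) (a + l + 1 + 1) c * RR n a (a + 1) c
        = RR n a (a + 1) (a + l + 1 + 1) * RR n a (a + l + 1 + 1) c := by
      rw [RR_mul, j4, RR_mul]
    rw [show a + (l + 1) + 1 = a + l + 1 + 1 by omega]
    simp only [mul_sub, sub_mul, mul_one, one_mul]
    rw [k4, ← mul_assoc (RR n a (a + 1) (a + l + 1 + 1)) (RR n (a + l + 1) (a + l + 1 + 1) c),
      k1, k2, k3]
    abel

theorem SS_sq {n : ℕ} (l a : ℕ) (h : a + l + 1 ≤ n) :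
    SS n a l (a + l + 1) * SS n a l (a + l + 1) = ((l : ℂ) + 1) • SS n a l (a + l + 1) := by
  induction l generalizing a with
  | zero => simp [SS]
  | succ l ih =>
    have e1 : SS n a (l + 1) (a + (l + 1) + 1)
        = SS n (a + 1) l (a + l + 1 + 1) * (1 - RR n a (a + 1) (a + l + 1 + 1)) := rfl
    have ih1 := ih (a + 1) (by omega)
    rw [show a + 1 + l + 1 = a + l + 1 + 1 by omega] at ih1
    have sh := SS_shift (n := n) (a := a) (b := a + l + 1 + 1) (by omega) l a (a + l + 1)
      le_rfl (by omega) le_rfl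
    have J := SS_jacobi (n := n) (c := a + l + 1 + 1) (by omega) l a (by omega)
    have k : RR n a (a + 1) (a + l + 1 + 1) * RR n a (a + l + 1) (a + l + 1 + 1) = 1 := by
      have j3 := rot_j3 (n := n) (a := a) (b := a + l + 1 + 1) (c := a + l + 1 + 1)
        (by omega) (by omega) (by omega)
      rw [Nat.add_sub_cancel] at j3
      rw [RR_mul, j3, rot_top (by omega) (by omega), map_one]
    have f2 : SS n (a + 1) l (a + l + 1 + 1) * (RR n a (a + 1) (a + l + 1 + 1)
          * SS n a (l + 1) (a + l + 1 + 1))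
        = SS n (a + 1) l (a + l + 1 + 1) * (RR n a (a + 1) (a + l + 1 + 1) - 1) := by
      rw [← mul_assoc, sh, mul_assoc, J, ← mul_assoc, ← sh, mul_assoc, mul_sub, mul_one, k]
    have f1 : SS n (a + 1) l (a + l + 1 + 1) * SS n a (l + 1) (a + l + 1 + 1)
        = ((l : ℂ) + 1) • (SS n a (l + 1) (a + l + 1 + 1)) := by
      rw [SS, ← mul_assoc, ih1, smul_mul_assoc]
    rw [show a + (l + 1) + 1 = a + l + 1 + 1 by omega] at e1 ⊢
    nth_rw 1 [e1]
    rw [mul_assoc, sub_mul, one_mul, mul_sub, f1, f2, ← neg_sub (1 : GA n), mul_neg, ← e1]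
    push_cast
    rw [sub_neg_eq_add, add_smul ((l : ℂ) + 1) (1 : ℂ), one_smul]

end

noncomputable section

theorem SS_comm' {n : ℕ} {k : ℕ} 
    (l x c : ℕ) (h1 : k + 1 ≤ x) (h2 : x + l ≤ c) (h3 : c ≤ n) :
    SS n x l c * RR n 0 k (k + 1) = RR n 0 k (k + 1) * SS n x l c := by
  induction l generalizing x with
  | zero => simp [SS]
  | succ l ih =>
    rw [SS, mul_assoc, ← mul_assoc (RR n 0 k (k + 1)), ← ih (x + 1) (by omega) (by omega),
      mul_assoc]
    congr 1
    rw [sub_mul, mul_sub, one_mul, mul_one, RR_mul, RR_mul,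
      rot_comm (Nat.zero_le _) (Nat.le_succ _) h1 (by omega) (by omega) h3]

theorem isUnit_one_sub {A : Type*} [Ring A] [Algebra ℂ A] (q : ℂ) (x : A) (k : ℕ)
    (hx : x ^ k = 1) (hq : q ^ k ≠ 1) : IsUnit (1 - q • x) := by
  have h1 := mul_neg_geom_sum (q • x) k
  have h2 := (Commute.refl (q • x))
  have hc : Commute (1 - q • x) (∑ i ∈ Finset.range k, (q • x) ^ i) := by
    apply Commute.sum_right
    intro i _
    exact ((Commute.one_left _).sub_left (Commute.refl _)).pow_right i
  have hu : IsUnit ((1 - q • x) * ∑ i ∈ Finset.range k, (q • x) ^ i) := by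
    rw [h1, smul_pow, hx]
    have : (1 : A) - q ^ k • (1 : A) = algebraMap ℂ A (1 - q ^ k) := by
      rw [map_sub, map_one, Algebra.algebraMap_eq_smul_one]
    rw [this]
    exact (IsUnit.mk0 _ (sub_ne_zero.2 hq.symm)).map _
  exact (hc.isUnit_mul_iff.1 hu).1

/-- the twisted sum over the cyclic group -/
def CC (n : ℕ) (w : ℂ) : GA n := ∑ i ∈ Finset.range n, (w • RR n 0 1 n) ^ i

theorem RR_pow {n a b c : ℕ} (k : ℕ) :
    RR n a b c ^ k = MonoidAlgebra.of ℂ _ (rot n a b c ^ k) := (map_pow _ _ _).symm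

theorem gam_pow {n : ℕ} (hn : 1 ≤ n) {w : ℂ} (hw : w ^ n = 1) : (w • RR n 0 1 n) ^ n = 1 := by
  have h := rot_pow (n := n) (a := 0) (c := n) (by omega) le_rfl n (by omega)
  rw [Nat.zero_add, Nat.zero_add, rot_top (Nat.zero_le _) le_rfl] at h
  rw [smul_pow, hw, one_smul, RR_pow, h, map_one]

theorem gam_CC {n : ℕ} (hn : 1 ≤ n) {w : ℂ} (hw : w ^ n = 1) :
    (w • RR n 0 1 n) * CC n w = CC n w := by
  have h := mul_neg_geom_sum (w • RR n 0 1 n) n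
  rw [gam_pow hn hw, sub_self, sub_mul, one_mul, sub_eq_zero] at h
  exact h.symm

theorem CC_sq {n : ℕ} (hn : 1 ≤ n) {w : ℂ} (hw : w ^ n = 1) :
    CC n w * CC n w = (n : ℂ) • CC n w := by
  have h : ∀ i : ℕ, (w • RR n 0 1 n) ^ i * CC n w = CC n w := by
    intro i
    induction i with
    | zero => simp
    | succ i ih => rw [pow_succ, mul_assoc, gam_CC hn hw, ih]
  conv_lhs => enter [1]; rw [CC]
  rw [Finset.sum_mul, Finset.sum_congr rfl (fun i _ => h i)]
  rw [Finset.sum_const, Finset.card_range, ← Nat.cast_smul_eq_nsmul ℂ]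

theorem SS_CC {n : ℕ} (hn : 1 ≤ n) {w : ℂ} (hw : IsPrimitiveRoot w n) (l k : ℕ)
    (h : k + l + 1 ≤ n) : ∃ b : GA n, IsUnit b ∧ SS n k l n * CC n w = b * CC n w := by
  induction l generalizing k with
  | zero => exact ⟨1, isUnit_one, by simp [SS]⟩
  | succ l ih =>
    obtain ⟨b, hb, hbC⟩ := ih (k + 1) (by omega)
    have hw0 : w ≠ 0 := hw.ne_zero (by omega)
    have key : RR n k (k + 1) n * CC n w = (w⁻¹ • RR n 0 k (k + 1)) * CC n w := by
      have : RR n k (k + 1) n = RR n 0 k (k + 1) * RR n 0 1 n := by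
        rw [RR_mul, ← rot_eta (by omega)]; rfl
      conv_rhs => rw [← gam_CC hn hw.pow_eq_one]
      rw [this, smul_mul_assoc, smul_mul_assoc, mul_smul_comm, smul_smul, inv_mul_cancel₀ hw0,
        one_smul, mul_assoc]
    refine ⟨(1 - w⁻¹ • RR n 0 k (k + 1)) * b, IsUnit.mul ?_ hb, ?_⟩
    · apply isUnit_one_sub _ _ (k + 1)
      · rw [RR_pow, rot_pow' (by omega), map_one]
      · exact hw.inv.pow_ne_one_of_pos_of_lt (by omega) (by omega)
    · rw [SS, mul_assoc, sub_mul, key, one_mul, mul_assoc, ← hbC, ← mul_assoc, sub_mul (1 : GA n),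
        one_mul, smul_mul_assoc _ _ (SS n _ _ _), ← SS_comm' l (k + 1) n le_rfl (by omega) le_rfl,
        mul_sub, sub_mul, smul_mul_assoc, smul_mul_assoc, mul_smul_comm, mul_assoc]

theorem trace_mulLeft {n : ℕ} (a : GA n) :
    LinearMap.trace ℂ (GA n) (LinearMap.mulLeft ℂ a)
      = (Fintype.card (Equiv.Perm (Fin n)) : ℂ) * a.coeff 1 := by
  classical
  let B : Module.Basis (Equiv.Perm (Fin n)) ℂ (GA n) :=
    Module.Basis.ofRepr (MonoidAlgebra.coeffLinearEquiv ℂ)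
  have hB : ∀ g, B g = MonoidAlgebra.single g (1 : ℂ) := fun g => rfl
  have hr : ∀ x g, B.repr x g = x.coeff g := fun x g => rfl
  rw [LinearMap.trace_eq_matrix_trace ℂ B, Matrix.trace]
  have : ∀ g, (LinearMap.toMatrix B B (LinearMap.mulLeft ℂ a)).diag g = a.coeff 1 := by
    intro g
    rw [Matrix.diag_apply, LinearMap.toMatrix_apply, hr, hB, LinearMap.mulLeft_apply]
    simp
  rw [Finset.sum_congr rfl (fun g _ => this g)]
  simp

theorem idem_zero {n : ℕ} (a : GA n) (h : a * a = a) (h0 : a.coeff 1 = 0) : a = 0 := by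
  have hi : IsIdempotentElem (LinearMap.mulLeft ℂ a) := by
    unfold IsIdempotentElem
    ext x
    simp [← mul_assoc, h]
  have ht := trace_mulLeft a
  rw [h0, mul_zero] at ht
  have := LinearMap.IsIdempotentElem.eq_zero_of_trace_eq_zero hi ht
  have h2 := LinearMap.congr_fun this 1
  simpa using h2

theorem lin_comm {n : ℕ} (φ : GA n →ₗ[ℂ] ℂ)
    (h : ∀ g k : Equiv.Perm (Fin n), φ (MonoidAlgebra.single (g * k) 1)
      = φ (MonoidAlgebra.single (k * g) 1)) (x y : GA n) : φ (x * y) = φ (y * x) := by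
  have hsingle : ∀ (g k : Equiv.Perm (Fin n)) (r s : ℂ),
      φ (MonoidAlgebra.single g r * MonoidAlgebra.single k s)
        = φ (MonoidAlgebra.single k s * MonoidAlgebra.single g r) := by
    intro g k r s
    rw [MonoidAlgebra.single_mul_single, MonoidAlgebra.single_mul_single, ← mul_one (r * s),
      ← mul_one (s * r), ← smul_eq_mul (r * s), ← smul_eq_mul (s * r),
      ← MonoidAlgebra.smul_single, ← MonoidAlgebra.smul_single, map_smul, map_smul, h, mul_comm r]
  induction x using MonoidAlgebra.induction_linear with
  | zero => simp
  | add x1 x2 h1 h2 => rw [add_mul, mul_add, map_add, map_add, h1, h2]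
  | single g r =>
    induction y using MonoidAlgebra.induction_linear with
    | zero => simp
    | add x1 x2 h1 h2 => rw [add_mul, mul_add, map_add, map_add, h1, h2]
    | single k s => exact hsingle g k r s

/-- the linear functional attached to a function on the group -/
def PHI {n : ℕ} (f : Equiv.Perm (Fin n) → ℂ) : GA n →ₗ[ℂ] ℂ where
  toFun x := ∑ g, f g * x.coeff g
  map_add' x y := by simp [mul_add, Finset.sum_add_distrib]
  map_smul' r x := by
    simp only [MonoidAlgebra.coeff_smul, Finsupp.smul_apply, smul_eq_mul, RingHom.id_apply,
      Finset.mul_sum]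
    exact Finset.sum_congr rfl (fun g _ => by ring)

theorem PHI_single {n : ℕ} (f : Equiv.Perm (Fin n) → ℂ) (g : Equiv.Perm (Fin n)) (r : ℂ) :
    PHI f (MonoidAlgebra.single g r) = f g * r := by
  classical
  change ∑ k, f k * (MonoidAlgebra.single g r).coeff k = _
  simp [Finsupp.single_apply]

theorem PHI_comm {n : ℕ} (f : Equiv.Perm (Fin n) → ℂ) (hf : ∀ g k, f (g * k) = f (k * g))
    (x y : GA n) : PHI f (x * y) = PHI f (y * x) := by
  apply lin_comm
  intro g k
  rw [PHI_single, PHI_single, hf]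

theorem coeff_one_comm {n : ℕ} (a b : GA n) : (a * b).coeff 1 = (b * a).coeff 1 := by
  classical
  have h := PHI_comm (n := n) (fun g => if g = 1 then 1 else 0) (by
    intro g k
    have : g * k = 1 ↔ k * g = 1 := mul_eq_one_comm
    simp [this]) a b
  have e : ∀ x : GA n, PHI (fun g => if g = 1 then 1 else 0) x = x.coeff 1 := by
    intro x
    change ∑ k, (if k = 1 then (1 : ℂ) else 0) * x.coeff k = _
    simp
  rwa [e, e] at h

theorem trace_eq {n : ℕ} (hn : 1 ≤ n) (t C b : GA n) (ht : t * t = (n : ℂ) • t)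
    (hC : C * C = (n : ℂ) • C) (hb : IsUnit b) (htC : t * C = b * C)
    (h1 : t.coeff 1 = C.coeff 1) (φ : GA n →ₗ[ℂ] ℂ) (hφ : ∀ x y, φ (x * y) = φ (y * x)) :
    φ t = φ C := by
  have hn0 : (n : ℂ) ≠ 0 := by exact_mod_cast (by omega : n ≠ 0)
  obtain ⟨u, rfl⟩ := hb
  set v : GA n := ((u⁻¹ : (GA n)ˣ) : GA n) with hv
  have hvu : v * u = 1 := u.inv_mul
  have hvt : v * (t * C) = C := by rw [htC, ← mul_assoc, hvu, one_mul]
  -- `e = n⁻¹ t C v`, `f = n⁻¹ t`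
  set f : GA n := (n : ℂ)⁻¹ • t with hf
  set e : GA n := (n : ℂ)⁻¹ • (t * C * v) with he
  have hff : f * f = f := by
    rw [hf, smul_mul_smul_comm, ht, smul_smul]
    congr 1; field_simp
  have hfe : f * e = e := by
    rw [hf, he, smul_mul_smul_comm, ← mul_assoc, ← mul_assoc, ht]
    rw [smul_mul_assoc, smul_mul_assoc, smul_smul]
    congr 1; field_simp
  have hee : e * e = e := by
    rw [he, smul_mul_smul_comm]
    have : t * C * v * (t * C * v) = (n : ℂ) • (t * C * v) := by
      calc t * C * v * (t * C * v) = t * C * (v * (t * C)) * v := by simp only [mul_assoc]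
        _ = _ := by rw [hvt, mul_assoc t, hC, mul_smul_comm, smul_mul_assoc]
    rw [this, smul_smul]
    congr 1; field_simp
  have tr : ∀ ψ : GA n → ℂ, (∀ (r : ℂ) x, ψ (r • x) = r * ψ x) →
      (∀ x y, ψ (x * y) = ψ (y * x)) → ψ e = (n : ℂ)⁻¹ * ψ C := by
    intro ψ h1 h2
    rw [he, h1, h2, hvt]
  have hz : f - e * f = 0 := by
    apply idem_zero
    · have : (f - e * f) * (f - e * f)
          = f * f - (f * e) * f - e * (f * f) + e * (f * e) * f := by noncomm_ring
      rw [this, hff, hfe, hee]; abel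
    · have h3 : (e * f).coeff 1 = e.coeff 1 := by rw [coeff_one_comm, hfe]
      have h4 := tr (fun x => x.coeff 1) (by intro r x; simp) coeff_one_comm
      rw [MonoidAlgebra.coeff_sub, Finsupp.sub_apply, h3, h4, hf, ← h1]
      simp
  rw [sub_eq_zero] at hz
  have h5 : φ f = φ e := by
    conv_lhs => rw [hz]
    rw [hφ, hfe]
  rw [tr φ (by intro r x; simp) hφ, hf, map_smul, smul_eq_mul] at h5
  exact mul_left_cancel₀ (inv_ne_zero hn0) h5

end

/-! ### Unimodal permutations -/

/-- no interior local minimum pattern -/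
def NoValley {n : ℕ} (σ : Equiv.Perm (Fin n)) : Prop :=
  ∀ i j k : Fin n, i < j → j < k → ¬ (σ j < σ i ∧ σ j < σ k)

theorem unimodal_iff {n : ℕ} (hn : 1 ≤ n) (σ : Equiv.Perm (Fin n)) :
    Unimodal σ ↔ NoValley σ := by
  constructor
  · rintro ⟨m, h1, h2⟩ i j k hij hjk ⟨h3, h4⟩
    rcases le_total j m with hj | hj
    · exact absurd (h1 (show i ≤ m from hij.le.trans hj) hj hij) (not_lt.2 h3.le)
    · exact absurd (h2 hj (show m ≤ k from hj.trans hjk.le) hjk) (not_lt.2 h4.le)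
  · intro h
    have hmax : ∀ i, σ i ≤ ⟨n - 1, by omega⟩ := fun i => by
      rw [Fin.le_def]; have := (σ i).2; simp only; omega
    have hm : σ (σ.symm ⟨n - 1, by omega⟩) = ⟨n - 1, by omega⟩ := σ.apply_symm_apply _
    refine ⟨σ.symm ⟨n - 1, by omega⟩, ?_, ?_⟩
    · intro i hi j hj hij
      rcases eq_or_lt_of_le (show j ≤ _ from hj) with e | hlt
      · rw [e, hm]
        exact lt_of_le_of_ne (hmax i) (fun h' => hij.ne (by rw [e, ← h', σ.symm_apply_apply]))
      · by_contra hc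
        refine h i j _ hij hlt ⟨lt_of_le_of_ne (not_lt.1 hc) (σ.injective.ne hij.ne'), ?_⟩
        rw [hm]
        exact lt_of_le_of_ne (hmax j) (fun h' => hlt.ne (by rw [← h', σ.symm_apply_apply]))
    · intro i hi j hj hij
      rcases eq_or_lt_of_le (show _ ≤ i from hi) with e | hlt
      · rw [← e, hm]
        exact lt_of_le_of_ne (hmax j) (fun h' => hij.ne (by rw [← e, ← h', σ.symm_apply_apply]))
      · by_contra hc
        refine h _ i j hlt hij ⟨?_, lt_of_le_of_ne (not_lt.1 hc) (σ.injective.ne hij.ne)⟩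
        rw [hm]
        exact lt_of_le_of_ne (hmax i) (fun h' => hlt.ne' (by rw [← h', σ.symm_apply_apply]))


theorem step_lt {n a : ℕ} (ha : a + 1 < n) (τ : Equiv.Perm (Fin n))
    (hτ : ∀ i : Fin n, (i : ℕ) < a + 1 → τ i = i) (i : Fin n) (hi : (i : ℕ) < a) :
    (τ * rot n a (a + 1) n) i = i := by
  have : rot n a (a + 1) n i = i := by
    apply Fin.ext; rw [rot_val (by omega) (by omega) le_rfl]; unfold rotFun; rw [if_pos hi]
  rw [Equiv.Perm.mul_apply, this, hτ i (by omega)]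

theorem step_mid {n a : ℕ} (ha : a + 1 < n) (τ : Equiv.Perm (Fin n))
    (i j : Fin n) (hi : a ≤ (i : ℕ)) (hij : (j : ℕ) = i + 1) :
    (τ * rot n a (a + 1) n) i = τ j := by
  have : rot n a (a + 1) n i = j := by
    have := j.2
    apply Fin.ext; rw [rot_val (by omega) (by omega) le_rfl]; unfold rotFun
    split_ifs <;> omega
  rw [Equiv.Perm.mul_apply, this]

theorem step_last {n a : ℕ} (ha : a + 1 < n) (τ : Equiv.Perm (Fin n))
    (hτ : ∀ i : Fin n, (i : ℕ) < a + 1 → τ i = i) (i : Fin n) (hi : (i : ℕ) = n - 1) :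
    (τ * rot n a (a + 1) n) i = ⟨a, by omega⟩ := by
  have : rot n a (a + 1) n i = ⟨a, by omega⟩ := by
    apply Fin.ext; rw [rot_val (by omega) (by omega) le_rfl]; unfold rotFun
    simp only
    split_ifs <;> omega
  rw [Equiv.Perm.mul_apply, this, hτ _ (by simp)]

theorem fix_ge {n a : ℕ} (τ : Equiv.Perm (Fin n))
    (hτ : ∀ i : Fin n, (i : ℕ) < a → τ i = i) (i : Fin n) (hi : a ≤ (i : ℕ)) :
    a ≤ (τ i : ℕ) := by
  by_contra hc
  have := hτ (τ i) (by omega)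
  have := τ.injective this
  rw [this] at hc
  omega

theorem step_noValley {n a : ℕ} (ha : a + 1 < n) (τ : Equiv.Perm (Fin n))
    (hτ : ∀ i : Fin n, (i : ℕ) < a + 1 → τ i = i) :
    NoValley (τ * rot n a (a + 1) n) ↔ NoValley τ := by
  have hs := step_lt ha τ hτ
  have hm := step_mid ha τ
  have hl := step_last ha τ hτ
  constructor
  · intro h i j k hij hjk hv
    have hi' := i.2; have hj' := j.2; have hk' := k.2
    rw [Fin.lt_def] at hij hjk
    simp only [Fin.lt_def] at hv
    have hj : a + 1 ≤ (j : ℕ) := by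
      by_contra hc
      rw [hτ j (by omega), hτ i (by omega)] at hv
      omega
    have hi : a + 1 ≤ (i : ℕ) := by
      by_contra hc
      have := fix_ge τ hτ j hj
      rw [hτ i (by omega)] at hv
      omega
    apply h ⟨i - 1, by omega⟩ ⟨j - 1, by omega⟩ ⟨k - 1, by omega⟩
    · rw [Fin.lt_def]; simp only; omega
    · rw [Fin.lt_def]; simp only; omega
    · rw [hm ⟨i - 1, by omega⟩ i (by simp only; omega) (by simp only; omega),
        hm ⟨j - 1, by omega⟩ j (by simp only; omega) (by simp only; omega),
        hm ⟨k - 1, by omega⟩ k (by simp only; omega) (by simp only; omega)]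
      exact hv
  · intro h i j k hij hjk hv
    have hi' := i.2; have hj' := j.2; have hk' := k.2
    have hs' : ∀ i : Fin n, (i : ℕ) < a → (τ * rot n a (a + 1) n) i = i := hs
    have hge := fix_ge _ hs'
    rw [Fin.lt_def] at hij hjk
    simp only [Fin.lt_def] at hv
    have hj : a ≤ (j : ℕ) := by
      by_contra hc
      rw [hs j (by omega), hs i (by omega)] at hv
      omega
    have hi : a ≤ (i : ℕ) := by
      by_contra hc
      have := hge j hj
      rw [hs i (by omega)] at hv
      omega
    have hk : (k : ℕ) + 1 < n := by
      by_contra hc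
      have := hge j hj
      rw [hl k (by omega)] at hv
      simp only at hv
      omega
    rw [hm i ⟨i + 1, by omega⟩ hi rfl, hm j ⟨j + 1, by omega⟩ hj rfl,
      hm k ⟨k + 1, by omega⟩ (by omega) rfl] at hv
    apply h ⟨i + 1, by omega⟩ ⟨j + 1, by omega⟩ ⟨k + 1, by omega⟩ _ _ hv
    · rw [Fin.lt_def]; simp only; omega
    · rw [Fin.lt_def]; simp only; omega

theorem step_des {n a : ℕ} (ha : a + 1 < n) (τ : Equiv.Perm (Fin n))
    (hτ : ∀ i : Fin n, (i : ℕ) < a + 1 → τ i = i) :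
    desNum (τ * rot n a (a + 1) n) = desNum τ + 1 := by
  classical
  have hs := step_lt ha τ hτ
  have hm := step_mid ha τ
  have hl := step_last ha τ hτ
  have hge := fix_ge _ hs
  have hge' := fix_ge _ hτ
  unfold desNum
  have hmem : ∀ (ρ : Equiv.Perm (Fin n)) (i : Fin n), i ∈ descents ρ ↔
      ∃ j : Fin n, (j : ℕ) = (i : ℕ) + 1 ∧ ρ j < ρ i := by
    intro ρ i; simp [descents]
  have hpos : ∀ i ∈ descents τ, a + 1 ≤ (i : ℕ) := by
    intro i hi
    obtain ⟨j, hj, hlt⟩ := (hmem _ _).1 hi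
    by_contra hc
    rw [hτ i (by omega), Fin.lt_def] at hlt
    by_cases hja : (j : ℕ) < a + 1
    · rw [hτ j hja] at hlt; omega
    · have := hge' j (by omega); omega
  have himg : descents (τ * rot n a (a + 1) n)
      = insert ⟨n - 2, by omega⟩
        ((descents τ).image (fun i : Fin n => (⟨i - 1, by omega⟩ : Fin n))) := by
    ext i
    have hi' := i.2
    rw [hmem, Finset.mem_insert, Finset.mem_image]
    constructor
    · rintro ⟨j, hj, hlt⟩
      have hj' := j.2
      by_cases hi2 : (i : ℕ) = n - 2
      · left; exact Fin.ext hi2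
      · right
        have hia : a ≤ (i : ℕ) := by
          by_contra hc
          rw [hs i (by omega), Fin.lt_def] at hlt
          by_cases hja : (j : ℕ) < a
          · rw [hs j hja] at hlt; omega
          · have := hge j (by omega); omega
        rw [hm i j hia hj, hm j ⟨j + 1, by omega⟩ (by omega) rfl] at hlt
        exact ⟨j, (hmem _ _).2 ⟨_, rfl, hlt⟩, Fin.ext (by simp only; omega)⟩
    · rintro (e | ⟨k, hk, e⟩)
      · have hi2 : (i : ℕ) = n - 2 := by rw [e]
        refine ⟨⟨n - 1, by omega⟩, by simp only; omega, ?_⟩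
        rw [hl _ rfl, Fin.lt_def, hm i ⟨n - 1, by omega⟩ (by omega) (by simp only; omega)]
        have := hge' ⟨n - 1, by omega⟩ (by simp only; omega)
        simp only; omega
      · have hka := hpos k hk
        obtain ⟨j, hj, hlt⟩ := (hmem _ _).1 hk
        have hki : (i : ℕ) = k - 1 := by rw [← e]
        refine ⟨k, by omega, ?_⟩
        rw [hm i k (by omega) (by omega), hm k j (by omega) hj]
        exact hlt
  rw [himg, Finset.card_insert_of_notMem, Finset.card_image_of_injOn]
  · intro x hx y hy hxy
    have h1 := hpos x hx
    have h2 := hpos y hy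
    simp only [Fin.mk.injEq] at hxy
    exact Fin.ext (by omega)
  · rw [Finset.mem_image]
    rintro ⟨k, hk, e⟩
    obtain ⟨j, hj, -⟩ := (hmem _ _).1 hk
    have := j.2
    have := hpos k hk
    simp only [Fin.mk.injEq] at e
    omega


theorem last_eq {n a : ℕ} (ha : a + 1 < n) (σ : Equiv.Perm (Fin n)) (hv : NoValley σ)
    (hσ : ∀ i : Fin n, (i : ℕ) < a → σ i = i) (hne : σ ⟨a, by omega⟩ ≠ ⟨a, by omega⟩) :
    σ ⟨n - 1, by omega⟩ = ⟨a, by omega⟩ := by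
  set p := σ.symm ⟨a, by omega⟩ with hp
  have hpa : σ p = ⟨a, by omega⟩ := σ.apply_symm_apply _
  have hp1 : a ≤ (p : ℕ) := by
    by_contra hc
    have h := hσ p (by omega)
    rw [hpa] at h
    rw [← h] at hc
    simp at hc
  have hp2 : (p : ℕ) ≠ a := by
    intro h
    have : p = ⟨a, by omega⟩ := Fin.ext h
    rw [this] at hpa
    exact hne hpa
  by_contra hc
  have hpl : (p : ℕ) ≠ n - 1 := by
    intro h
    have : p = ⟨n - 1, by omega⟩ := Fin.ext h
    rw [this] at hpa
    exact hc hpa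
  have := p.2
  refine hv ⟨a, by omega⟩ p ⟨n - 1, by omega⟩ ?_ ?_ ⟨?_, ?_⟩
  · rw [Fin.lt_def]; simp only; omega
  · rw [Fin.lt_def]; simp only; omega
  · have h1 := fix_ge σ hσ ⟨a, by omega⟩ le_rfl
    rw [hpa]
    exact lt_of_le_of_ne (by rw [Fin.le_def]; exact h1) hne.symm
  · have h1 := fix_ge σ hσ ⟨n - 1, by omega⟩ (by simp only; omega)
    rw [hpa]
    exact lt_of_le_of_ne (by rw [Fin.le_def]; exact h1) (Ne.symm hc)

open scoped Classical in
theorem SS_coeff {n : ℕ} (l a : ℕ) (h : a + l + 1 = n) (σ : Equiv.Perm (Fin n)) :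
    (SS n a l n).coeff σ
      = if NoValley σ ∧ (∀ i : Fin n, (i : ℕ) < a → σ i = i) then (-1 : ℂ) ^ desNum σ else 0 := by
  induction l generalizing a σ with
  | zero =>
    have h1 : (∀ i : Fin n, (i : ℕ) < a → σ i = i) → σ = 1 := by
      intro hσ
      ext i
      have hi := i.2
      by_cases hia : (i : ℕ) < a
      · rw [hσ i hia]; rfl
      · have h2 := fix_ge σ hσ i (by omega)
        have := (σ i).2
        simp only [Equiv.Perm.one_apply]
        omega
    have h2 : NoValley (1 : Equiv.Perm (Fin n)) := by
      intro i j k hij hjk hv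
      exact absurd hv.1 (not_lt.2 hij.le)
    have h3 : desNum (1 : Equiv.Perm (Fin n)) = 0 := by
      unfold desNum descents
      rw [Finset.card_eq_zero, Finset.filter_eq_empty_iff]
      rintro i - ⟨j, hj, hlt⟩
      rw [Equiv.Perm.one_apply, Equiv.Perm.one_apply, Fin.lt_def] at hlt
      omega
    rw [SS, MonoidAlgebra.one_def, MonoidAlgebra.coeff_single, Finsupp.single_apply]
    by_cases hσ : σ = 1
    · subst hσ
      rw [if_pos rfl, if_pos ⟨h2, fun _ _ => rfl⟩, h3, pow_zero]
    · rw [if_neg (Ne.symm hσ), if_neg (fun hc => hσ (h1 hc.2))]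
  | succ l ih =>
    have ha : a + 1 < n := by omega
    set r := rot n a (a + 1) n with hr
    have e : (SS n a (l + 1) n).coeff σ
        = (SS n (a + 1) l n).coeff σ - (SS n (a + 1) l n).coeff (σ * r⁻¹) := by
      rw [SS, mul_sub, mul_one, RR, MonoidAlgebra.of_apply, MonoidAlgebra.coeff_sub,
        Finsupp.sub_apply, MonoidAlgebra.coeff_mul_single_apply, mul_one]
    rw [e, ih (a + 1) (by omega), ih (a + 1) (by omega)]
    set τ := σ * r⁻¹ with hτ
    have hστ : σ = τ * r := by rw [hτ, inv_mul_cancel_right]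
    have hfix : (∀ i : Fin n, (i : ℕ) < a + 1 → τ i = i) →
        (∀ i : Fin n, (i : ℕ) < a → σ i = i) ∧ σ ⟨a, by omega⟩ ≠ ⟨a, by omega⟩ := by
      intro hf
      refine ⟨fun i hi => by rw [hστ]; exact step_lt ha τ hf i hi, fun hc => ?_⟩
      have h1 := step_last ha τ hf ⟨n - 1, by omega⟩ rfl
      rw [← hr, ← hστ, ← hc] at h1
      have := congrArg Fin.val (σ.injective h1)
      simp only at this
      omega
    have hfix2 : (∀ i : Fin n, (i : ℕ) < a → σ i = i) → σ ⟨n - 1, by omega⟩ = ⟨a, by omega⟩ →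
        (∀ i : Fin n, (i : ℕ) < a + 1 → τ i = i) := by
      intro hf hlast i hi
      by_cases hia : (i : ℕ) < a
      · have : r i = i := by
          apply Fin.ext; rw [hr, rot_val (by omega) (by omega) le_rfl]; unfold rotFun
          rw [if_pos hia]
        have h1 := hf i hia
        rwa [hστ, Equiv.Perm.mul_apply, this] at h1
      · have hia' : i = ⟨a, by omega⟩ := Fin.ext (by simp only; omega)
        have : r ⟨n - 1, by omega⟩ = i := by
          apply Fin.ext; rw [hr, rot_val (by omega) (by omega) le_rfl]; unfold rotFun
          simp only
          split_ifs <;> omega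
        rwa [hστ, Equiv.Perm.mul_apply, this, ← hia'] at hlast
    by_cases hA : NoValley σ ∧ ∀ i : Fin n, (i : ℕ) < a + 1 → σ i = i
    · have hB : ¬ (NoValley τ ∧ ∀ i : Fin n, (i : ℕ) < a + 1 → τ i = i) := by
        rintro ⟨-, hc⟩
        exact (hfix hc).2 (hA.2 _ (by simp))
      rw [if_pos hA, if_neg hB, if_pos ⟨hA.1, fun i hi => hA.2 i (by omega)⟩, sub_zero]
    · rw [if_neg hA]
      by_cases hB : NoValley τ ∧ ∀ i : Fin n, (i : ℕ) < a + 1 → τ i = i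
      · have hnv : NoValley σ := by rw [hστ]; exact (step_noValley ha τ hB.2).2 hB.1
        rw [if_pos hB, if_pos ⟨hnv, (hfix hB.2).1⟩]
        have hd := step_des ha τ hB.2
        rw [← hr, ← hστ] at hd
        rw [hd, pow_succ]; ring
      · rw [if_neg hB, if_neg, sub_zero]
        rintro ⟨hv, hf⟩
        by_cases hσa : σ ⟨a, by omega⟩ = ⟨a, by omega⟩
        · apply hA
          refine ⟨hv, fun i hi => ?_⟩
          by_cases hia : (i : ℕ) < a
          · exact hf i hia
          · have hia' : i = ⟨a, by omega⟩ := Fin.ext (by simp only; omega)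
            rw [hia', hσa]
        · have hf' := hfix2 hf (last_eq ha σ hv hf hσa)
          apply hB
          refine ⟨?_, hf'⟩
          rw [← step_noValley ha τ hf', ← hr, ← hστ]
          exact hv

/-! ### Cycle types of powers of the long cycle -/

theorem fullCycleType_free {n : ℕ} (hn : 1 ≤ n) (σ : Equiv.Perm (Fin n))
    (h : ∀ (j : ℕ) (x : Fin n), (σ ^ j) x = x → σ ^ j = 1) :
    fullCycleType σ = Multiset.replicate (n / orderOf σ) (orderOf σ) := by
  unfold fullCycleType
  by_cases h1 : σ = 1
  · subst h1
    simp
  · have hsupp : σ.support = Finset.univ := by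
      ext x
      simp only [Equiv.Perm.mem_support, Finset.mem_univ, iff_true]
      intro hx
      have := h 1 x (by rwa [pow_one])
      rw [pow_one] at this
      exact h1 this
    have hall : ∀ k ∈ σ.cycleType, k = orderOf σ := by
      intro k hk
      apply Nat.dvd_antisymm (Equiv.Perm.dvd_of_mem_cycleType hk)
      obtain ⟨c, τ, rfl, hd, hc, rfl⟩ := Equiv.Perm.mem_cycleType_iff.1 hk
      obtain ⟨x, hx⟩ := hc.nonempty_support
      rw [orderOf_dvd_iff_pow_eq_one]
      apply h _ x
      have hτ : τ x = x := (hd x).resolve_left (Equiv.Perm.mem_support.1 hx)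
      rw [hd.commute.mul_pow, Equiv.Perm.mul_apply,
        Equiv.Perm.pow_apply_eq_self_of_apply_eq_self hτ, ← hc.orderOf, pow_orderOf_eq_one]
      rfl
    have hrep := Multiset.eq_replicate_of_mem hall
    have hsum := σ.sum_cycleType
    rw [hrep, hsupp, Multiset.sum_replicate, Finset.card_univ, Fintype.card_fin,
      smul_eq_mul] at hsum
    have hcard : Multiset.card σ.cycleType = n / orderOf σ := by
      exact (Nat.div_eq_of_eq_mul_left (orderOf_pos σ) hsum.symm).symm
    rw [hsupp, Finset.card_univ, Fintype.card_fin, Nat.sub_self, Multiset.replicate_zero, add_zero,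
      ← hcard]
    exact hrep

theorem gam_pow_n {n : ℕ} (hn : 1 ≤ n) : rot n 0 1 n ^ n = 1 := by
  have h := rot_pow (n := n) (a := 0) (c := n) (by omega) le_rfl n (by omega)
  rwa [Nat.zero_add, Nat.zero_add, rot_top (Nat.zero_le _) le_rfl] at h

theorem gam_free {n : ℕ} (hn : 1 ≤ n) (k : ℕ) (x : Fin n) (h : (rot n 0 1 n ^ k) x = x) :
    n ∣ k := by
  have h1 : rot n 0 1 n ^ k = rot n 0 1 n ^ (k % n) := by
    conv_lhs => rw [← Nat.div_add_mod k n, pow_add, pow_mul, gam_pow_n hn, one_pow, one_mul]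
  have hlt := Nat.mod_lt k (show n > 0 by omega)
  have h2 := rot_pow (n := n) (a := 0) (c := n) (by omega) le_rfl (k % n) (by omega)
  rw [Nat.zero_add, Nat.zero_add] at h2
  rw [h1, h2] at h
  have h3 := congrArg Fin.val h
  rw [rot_val (by omega) (by omega) le_rfl] at h3
  apply Nat.dvd_of_mod_eq_zero
  have := x.2
  unfold rotFun at h3
  split_ifs at h3 <;> omega

theorem gam_order {n : ℕ} (hn : 1 ≤ n) : orderOf (rot n 0 1 n) = n := by
  apply Nat.dvd_antisymm (orderOf_dvd_of_pow_eq_one (gam_pow_n hn))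
  apply gam_free hn _ ⟨0, by omega⟩
  rw [pow_orderOf_eq_one]; rfl

theorem fullCycleType_gam {n : ℕ} (hn : 1 ≤ n) (i : ℕ) :
    fullCycleType (rot n 0 1 n ^ i)
      = Multiset.replicate (n / orderOf (rot n 0 1 n ^ i)) (orderOf (rot n 0 1 n ^ i)) := by
  apply fullCycleType_free hn
  intro j x hx
  rw [← pow_mul] at hx ⊢
  obtain ⟨k, hk⟩ := gam_free hn _ x hx
  rw [hk, pow_mul, gam_pow_n hn, one_pow]

theorem fullCycleType_comm {n : ℕ} (g k : Equiv.Perm (Fin n)) :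
    fullCycleType (g * k) = fullCycleType (k * g) := by
  have h : (g * k).cycleType = (k * g).cycleType := by
    have := Equiv.Perm.cycleType_conj (σ := k * g) (τ := g)
    rw [← this]
    congr 1
    group
  unfold fullCycleType
  rw [← Equiv.Perm.sum_cycleType, ← Equiv.Perm.sum_cycleType, h]

/-! ### Sums of roots of unity -/

theorem sum_pow_roots {n : ℕ} (hn : 1 ≤ n) {w : ℂ} (hw : IsPrimitiveRoot w n) (f : ℂ → ℂ) :
    ∑ i ∈ Finset.range n, f (w ^ i) = ∑ z ∈ Polynomial.nthRootsFinset n (1 : ℂ), f z := by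
  classical
  have himg : Polynomial.nthRootsFinset n (1 : ℂ) = (Finset.range n).image (fun i => w ^ i) := by
    ext z
    rw [Polynomial.mem_nthRootsFinset (by omega), Finset.mem_image]
    constructor
    · intro hz
      have : NeZero n := ⟨by omega⟩
      obtain ⟨i, hi, h⟩ := hw.eq_pow_of_pow_eq_one hz
      exact ⟨i, Finset.mem_range.2 hi, h⟩
    · rintro ⟨i, -, rfl⟩
      rw [← pow_mul, mul_comm, pow_mul, hw.pow_eq_one, one_pow]
  rw [himg, Finset.sum_image]
  intro i hi j hj hij
  exact hw.pow_inj (Finset.mem_range.1 hi) (Finset.mem_range.1 hj) hij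

theorem sum_primitiveRoots (d : ℕ) (hd : 0 < d) :
    ∑ z ∈ primitiveRoots d ℂ, z = ((ArithmeticFunction.moebius d : ℤ) : ℂ) := by
  classical
  have key := (ArithmeticFunction.sum_eq_iff_sum_mul_moebius_eq (R := ℂ)
    (f := fun d => ∑ z ∈ primitiveRoots d ℂ, z) (g := fun d => if d = 1 then 1 else 0)).1 (by
      intro n hn
      have hw := Complex.isPrimitiveRoot_exp n (by omega)
      rw [← Finset.sum_biUnion, ← IsPrimitiveRoot.nthRoots_one_eq_biUnion_primitiveRoots,
        ← sum_pow_roots hn hw (fun z => z)]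
      · split_ifs with h
        · subst h; simp
        · exact hw.geom_sum_eq_zero (by omega)
      · intro i _ j _ hij
        exact IsPrimitiveRoot.disjoint hij) d hd
  rw [← key, Finset.sum_eq_single (d, 1)]
  · simp
  · rintro ⟨x, y⟩ hxy hne
    rw [if_neg, mul_zero]
    rintro h
    simp only at h
    subst h
    rw [Nat.mem_divisorsAntidiagonal] at hxy
    apply hne
    rw [← hxy.1]; simp
  · intro h
    exact absurd (Nat.mem_divisorsAntidiagonal.2 ⟨by simp, hd.ne'⟩) h

open scoped Classical in
theorem sum_order {n : ℕ} (hn : 1 ≤ n) {w : ℂ} (hw : IsPrimitiveRoot w n) (d : ℕ) (hd : d ∣ n) :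
    ∑ i ∈ Finset.range n, (if orderOf (rot n 0 1 n ^ i) = d then (1 : ℂ) else 0) * w ^ i
      = ((ArithmeticFunction.moebius d : ℤ) : ℂ) := by
  have hd0 : 0 < d := Nat.pos_of_dvd_of_pos hd hn
  have h1 : ∀ i : ℕ, orderOf (rot n 0 1 n ^ i) = orderOf (w ^ i) := by
    intro i
    rcases Nat.eq_zero_or_pos i with rfl | hi
    · simp
    · rw [orderOf_pow' _ hi.ne', orderOf_pow' _ hi.ne', gam_order hn, ← hw.eq_orderOf]
  have h2 : ∀ i : ℕ, (if orderOf (rot n 0 1 n ^ i) = d then (1 : ℂ) else 0) * w ^ i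
      = (fun z => if z ∈ primitiveRoots d ℂ then z else 0) (w ^ i) := by
    intro i
    simp only [h1, mem_primitiveRoots hd0, IsPrimitiveRoot.iff_orderOf, ite_mul, one_mul, zero_mul]
  rw [Finset.sum_congr rfl (fun i _ => h2 i),
    sum_pow_roots hn hw (fun z => if z ∈ primitiveRoots d ℂ then z else 0), ← Finset.sum_filter,
    ← sum_primitiveRoots d hd0]
  congr 1
  ext z
  rw [Finset.mem_filter, Polynomial.mem_nthRootsFinset (by omega)]
  constructor
  · exact fun h => h.2
  · intro h
    refine ⟨?_, h⟩
    obtain ⟨k, rfl⟩ := hd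
    rw [pow_mul, ((mem_primitiveRoots hd0).1 h).pow_eq_one, one_pow]

theorem PHI_CC {n : ℕ} (w : ℂ) (f : Equiv.Perm (Fin n) → ℂ) :
    PHI f (CC n w) = ∑ i ∈ Finset.range n, f (rot n 0 1 n ^ i) * w ^ i := by
  rw [CC, map_sum]
  apply Finset.sum_congr rfl
  intro i _
  rw [smul_pow, RR_pow, MonoidAlgebra.of_apply, map_smul, PHI_single, smul_eq_mul]
  ring

open scoped Classical in
theorem main_trace {n : ℕ} (hn : 1 ≤ n) {w : ℂ} (hw : IsPrimitiveRoot w n)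
    (f : Equiv.Perm (Fin n) → ℂ) (hf : ∀ g k, f (g * k) = f (k * g)) :
    ∑ σ : Equiv.Perm (Fin n), f σ * (if NoValley σ then (-1 : ℂ) ^ desNum σ else 0)
      = ∑ i ∈ Finset.range n, f (rot n 0 1 n ^ i) * w ^ i := by
  obtain ⟨N, rfl⟩ : ∃ N, n = N + 1 := ⟨n - 1, by omega⟩
  have hcoef : ∀ σ, (SS (N + 1) 0 N (N + 1)).coeff σ
      = if NoValley σ then (-1 : ℂ) ^ desNum σ else 0 := by
    intro σ
    rw [SS_coeff N 0 (by omega) σ]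
    simp
  obtain ⟨b, hb, hbC⟩ := SS_CC hn hw N 0 (by omega)
  have hsq := SS_sq (n := N + 1) N 0 (by omega)
  rw [Nat.zero_add] at hsq
  have h1 : ∀ x : GA (N + 1), x.coeff 1 = PHI (fun g => if g = 1 then 1 else 0) x := by
    intro x
    change _ = ∑ k, (if k = 1 then (1 : ℂ) else 0) * x.coeff k
    simp
  have hone : (SS (N + 1) 0 N (N + 1)).coeff 1 = (CC (N + 1) w).coeff 1 := by
    have e1 : NoValley (1 : Equiv.Perm (Fin (N + 1))) := by
      intro i j k hij hjk hv
      exact absurd hv.1 (not_lt.2 hij.le)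
    have e2 : desNum (1 : Equiv.Perm (Fin (N + 1))) = 0 := by
      unfold desNum descents
      rw [Finset.card_eq_zero, Finset.filter_eq_empty_iff]
      rintro i - ⟨j, hj, hlt⟩
      rw [Equiv.Perm.one_apply, Equiv.Perm.one_apply, Fin.lt_def] at hlt
      omega
    rw [hcoef, if_pos e1, e2, pow_zero, h1, PHI_CC, Finset.sum_eq_single 0]
    · simp
    · intro i hi hi0
      rw [if_neg, zero_mul]
      intro hc
      have := gam_free hn i 0 (by rw [hc]; rfl)
      have := Nat.le_of_dvd (by omega) this
      have := Finset.mem_range.1 hi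
      omega
    · intro h; exact absurd (Finset.mem_range.2 (by omega)) h
  have := trace_eq hn _ _ b (by rw [hsq]; push_cast; rfl) (CC_sq hn hw.pow_eq_one) hb hbC hone
    (PHI f) (PHI_comm f hf)
  rw [PHI_CC] at this
  rw [← this]
  change _ = ∑ k, f k * _
  exact Finset.sum_congr rfl (fun σ _ => by rw [hcoef])


open scoped Classical in
/-- For a partition `α` of `n`, the signed sum `Σ (-1)^(des σ)` over unimodal
permutations of cycle type `α` is `0` unless all parts of `α` are equal to some
`d`, in which case it equals `μ(d)`. -/
theorem signed_sum_unimodal (n : ℕ) (hn : 1 ≤ n) (α : Multiset ℕ)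
    (hsum : α.sum = n) (hpos : ∀ a ∈ α, 1 ≤ a) :
    ((¬ ∃ d m : ℕ, α = Multiset.replicate m d) →
      (∑ σ : Equiv.Perm (Fin n),
        if Unimodal σ ∧ fullCycleType σ = α then (-1 : ℤ) ^ desNum σ else 0) = 0) ∧
    (∀ d m : ℕ, 1 ≤ m → α = Multiset.replicate m d →
      (∑ σ : Equiv.Perm (Fin n),
        if Unimodal σ ∧ fullCycleType σ = α then (-1 : ℤ) ^ desNum σ else 0) =
        ArithmeticFunction.moebius d) := by
  have hw := Complex.isPrimitiveRoot_exp n (by omega)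
  have key := main_trace hn hw (fun σ => if fullCycleType σ = α then (1 : ℂ) else 0)
    (fun g k => by simp only [fullCycleType_comm g k])
  have hL : ((∑ σ : Equiv.Perm (Fin n),
        if Unimodal σ ∧ fullCycleType σ = α then (-1 : ℤ) ^ desNum σ else 0 : ℤ) : ℂ)
      = ∑ σ : Equiv.Perm (Fin n), (if fullCycleType σ = α then (1 : ℂ) else 0) *
        (if NoValley σ then (-1 : ℂ) ^ desNum σ else 0) := by
    rw [Int.cast_sum]
    apply Finset.sum_congr rfl
    intro σ _
    rw [unimodal_iff hn]
    by_cases h1 : NoValley σ <;> by_cases h2 : fullCycleType σ = α <;> simp [h1, h2]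
  rw [← hL] at key
  constructor
  · intro hα
    have : ((∑ σ : Equiv.Perm (Fin n),
        if Unimodal σ ∧ fullCycleType σ = α then (-1 : ℤ) ^ desNum σ else 0 : ℤ) : ℂ) = 0 := by
      rw [key]
      apply Finset.sum_eq_zero
      intro i _
      rw [if_neg, zero_mul]
      intro hc
      exact hα ⟨_, _, by rw [← hc]; exact fullCycleType_gam hn i⟩
    exact_mod_cast this
  · intro d m hm hα
    have hdm : m * d = n := by rw [← hsum, hα, Multiset.sum_replicate, smul_eq_mul]
    have hd : d ∣ n := ⟨m, by rw [← hdm, mul_comm]⟩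
    have hd0 : 0 < d := Nat.pos_of_dvd_of_pos hd hn
    have : ((∑ σ : Equiv.Perm (Fin n),
        if Unimodal σ ∧ fullCycleType σ = α then (-1 : ℤ) ^ desNum σ else 0 : ℤ) : ℂ)
        = ((ArithmeticFunction.moebius d : ℤ) : ℂ) := by
      rw [key, ← sum_order hn hw d hd]
      apply Finset.sum_congr rfl
      intro i _
      have hiff : fullCycleType (rot n 0 1 n ^ i) = α ↔ orderOf (rot n 0 1 n ^ i) = d := by
        rw [fullCycleType_gam hn i, hα]
        constructor
        · intro h
          have hmem : d ∈ Multiset.replicate m d :=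
            Multiset.mem_replicate.2 ⟨by omega, rfl⟩
          rw [← h] at hmem
          exact (Multiset.eq_of_mem_replicate hmem).symm
        · intro h
          rw [h, ← hdm, Nat.mul_div_cancel _ hd0]
      simp only [hiff]
    exact_mod_cast this
end

section
/- For a prime p, the number of transitive unimodal permutations of {1,...,p} equals (2^(p-1) - 1)/p if p is odd, and equals 1 if p = 2. -/
namespace UnimodalCount

/-- Signed prefix parities of the word `w` read from position `a`. -/
def key {p : ℕ} (w : ZMod p → Bool) : ℕ → ZMod p → Bool
  | 0, a => w a
  | n + 1, a => xor (w a) (key w n (a + 1))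

def Klt {p : ℕ} (w : ZMod p → Bool) (a b : ZMod p) : Prop :=
  ∃ n, (∀ j < n, key w j a = key w j b) ∧ key w n a < key w n b

/-- `σ` increases where `u` is false, decreases where `u` is true. -/
def Good {p : ℕ} (σ : Equiv.Perm (Fin p)) (u : Fin p → Bool) : Prop :=
  Monotone u ∧ (∀ x y, u x = false → u y = false → x < y → σ x < σ y) ∧
    (∀ x y, u x = true → u y = true → x < y → σ y < σ x)

def Trans {p : ℕ} (σ : Equiv.Perm (Fin p)) : Prop :=
  ∀ i j : Fin p, ∃ k : ℕ, (σ ^ k) i = j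

lemma strictMono_eq {p : ℕ} (f : Fin p → Fin p) (h : StrictMono f) : ∀ x, f x = x := by
  have hs : Function.Surjective f := Finite.surjective_of_injective h.injective
  have : h.orderIsoOfSurjective f hs = OrderIso.refl _ := Subsingleton.elim _ _
  intro x
  have := congrArg (fun g => g x) this
  simpa using this

lemma klt_shift_false {p : ℕ} {w : ZMod p → Bool} {a b : ZMod p} (ha : w a = false)
    (hb : w b = false) (h : Klt w (a + 1) (b + 1)) : Klt w a b := by
  obtain ⟨n, h1, h2⟩ := h
  refine ⟨n + 1, ?_, ?_⟩
  · intro j hj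
    cases j with
    | zero => simp [key, ha, hb]
    | succ j => simp [key, ha, hb, h1 j (by omega)]
  · simpa [key, ha, hb] using h2

lemma klt_shift_true {p : ℕ} {w : ZMod p → Bool} {a b : ZMod p} (ha : w a = true)
    (hb : w b = true) (h : Klt w (a + 1) (b + 1)) : Klt w b a := by
  obtain ⟨n, h1, h2⟩ := h
  refine ⟨n + 1, ?_, ?_⟩
  · intro j hj
    cases j with
    | zero => simp [key, ha, hb]
    | succ j => simp [key, ha, hb, h1 j (by omega)]
  · rw [Bool.lt_iff] at h2
    simp [key, ha, hb, h2]

lemma klt_of {p : ℕ} {w : ZMod p → Bool} {a b : ZMod p} (ha : w a = false)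
    (hb : w b = true) : Klt w a b :=
  ⟨0, by simp, by simp [key, ha, hb]⟩

lemma key_inj {p : ℕ} [Fact p.Prime] {w : ZMod p → Bool} (hw : ¬ ∃ c, w = fun _ => c)
    {a b : ZMod p} (h : ∀ n, key w n a = key w n b) : a = b := by
  by_contra hab
  have h1 : ∀ m : ℕ, ∀ n, key w n (a + m) = key w n (b + m) := by
    intro m
    induction m with
    | zero => simpa using h
    | succ m ih =>
      intro n
      have h0 := ih 0
      have hn := ih (n + 1)
      simp only [key] at h0 hn
      rw [h0] at hn
      have := Bool.xor_right_inj.mp hn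
      push_cast
      rw [← add_assoc, ← add_assoc]
      exact this
  have h2 : ∀ x, w (x + (b - a)) = w x := by
    intro x
    have := h1 (x - a).val 0
    simp only [key, ZMod.natCast_val, ZMod.cast_id', id] at this
    rw [show a + (x - a) = x by ring] at this
    rw [this]
    congr 1
    ring
  have h3 : ∀ (m : ℕ) x, w (x + m * (b - a)) = w x := by
    intro m
    induction m with
    | zero => simp
    | succ m ih =>
      intro x
      rw [← ih x, ← h2 (x + m * (b - a))]
      congr 1
      push_cast
      ring
  apply hw
  refine ⟨w 0, funext fun x => ?_⟩
  have hne : b - a ≠ 0 := sub_ne_zero.mpr (Ne.symm hab)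
  have := h3 (x / (b - a)).val 0
  simp only [ZMod.natCast_val, ZMod.cast_id', id] at this
  rwa [div_mul_cancel₀ _ hne, zero_add] at this

lemma klt_imp {p : ℕ} {σ : Equiv.Perm (Fin p)} {u : Fin p → Bool} (hg : Good σ u)
    {e : ZMod p → Fin p} (he : ∀ a, e (a + 1) = σ (e a)) (n : ℕ) :
    ∀ a b, (∀ j < n, key (fun x => u (e x)) j a = key (fun x => u (e x)) j b) →
      key (fun x => u (e x)) n a < key (fun x => u (e x)) n b → e a < e b := by
  obtain ⟨hm, hf, ht⟩ := hg
  induction n with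
  | zero =>
    intro a b _ h
    simp only [key] at h
    by_contra hc
    exact absurd (hm (not_lt.mp hc)) (not_le.mpr h)
  | succ n ih =>
    intro a b h h'
    have h0 := h 0 (by omega)
    have hs : ∀ j < n, key (fun x => u (e x)) j (a + 1) = key (fun x => u (e x)) j (b + 1) := by
      intro j hj
      have := h (j + 1) (by omega)
      simp only [key] at this h0
      rw [h0] at this
      exact Bool.xor_right_inj.mp this
    simp only [key] at h0 h'
    cases hb : u (e b) with
    | false =>
      rw [hb] at h0
      rw [h0, hb] at h'
      have := ih (a + 1) (b + 1) hs (by simpa using h')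
      rw [he, he] at this
      by_contra hc
      rcases (not_lt.mp hc).lt_or_eq with hc | hc
      · exact absurd (hf _ _ hb h0 hc) (not_lt.mpr this.le)
      · rw [hc] at this; exact lt_irrefl _ this
    | true =>
      rw [hb] at h0
      rw [h0, hb] at h'
      have := ih (b + 1) (a + 1) (fun j hj => (hs j hj).symm) (by
        rw [Bool.lt_iff] at h' ⊢; simpa [and_comm] using h')
      rw [he, he] at this
      by_contra hc
      rcases (not_lt.mp hc).lt_or_eq with hc | hc
      · exact absurd (ht _ _ hb h0 hc) (not_lt.mpr this.le)
      · rw [hc] at this; exact lt_irrefl _ this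

lemma klt_total {p : ℕ} [Fact p.Prime] {w : ZMod p → Bool} (hw : ¬ ∃ c, w = fun _ => c)
    {a b : ZMod p} (h : a ≠ b) : Klt w a b ∨ Klt w b a := by
  classical
  have : ∃ n, key w n a ≠ key w n b := by
    by_contra hc
    push Not at hc
    exact h (key_inj hw hc)
  have h1 := Nat.find_spec this
  have h2 : ∀ j < Nat.find this, key w j a = key w j b := fun j hj =>
    not_not.mp (Nat.find_min this hj)
  rcases lt_or_gt_of_ne h1 with h3 | h3
  · exact Or.inl ⟨_, h2, h3⟩
  · exact Or.inr ⟨_, fun j hj => (h2 j hj).symm, h3⟩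

lemma exists_equiv {p : ℕ} [Fact p.Prime] {w : ZMod p → Bool} (hw : ¬ ∃ c, w = fun _ => c) :
    ∃ e : ZMod p ≃ Fin p, ∀ a b, e a < e b ↔ Klt w a b := by
  let f : ZMod p → Lex (ℕ → Bool) := fun a => toLex (fun n => key w n a)
  have hf : Function.Injective f := by
    intro a b h
    exact key_inj hw (fun n => congrFun (toLex.injective h) n)
  letI : LinearOrder (ZMod p) := LinearOrder.lift' f hf
  let e := monoEquivOfFin (ZMod p) (ZMod.card p)
  refine ⟨e.symm.toEquiv, fun a b => ?_⟩
  change e.symm a < e.symm b ↔ _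
  rw [e.symm.lt_iff_lt]
  rfl

lemma isCycleOn {p : ℕ} {σ : Equiv.Perm (Fin p)} (h : Trans σ) :
    σ.IsCycleOn ((Finset.univ : Finset (Fin p)) : Set (Fin p)) := by
  refine ⟨by simpa using σ.bijective, ?_⟩
  intro x _ y _
  obtain ⟨k, hk⟩ := h x y
  exact ⟨k, by simpa using hk⟩

lemma orbit_succ {p : ℕ} [Fact p.Prime] {σ : Equiv.Perm (Fin p)} (h : Trans σ) (i : Fin p)
    (a : ZMod p) : (σ ^ (a + 1).val) i = σ ((σ ^ a.val) i) := by
  have : σ ((σ ^ a.val) i) = (σ ^ (a.val + 1)) i := by rw [pow_succ']; rfl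
  rw [this, (isCycleOn h).pow_apply_eq_pow_apply (Finset.mem_univ i), Finset.card_univ,
    Fintype.card_fin, ← ZMod.natCast_eq_natCast_iff]
  simp

lemma orbit_bij {p : ℕ} [Fact p.Prime] {σ : Equiv.Perm (Fin p)} (h : Trans σ) (i : Fin p) :
    Function.Bijective (fun a : ZMod p => (σ ^ a.val) i) := by
  rw [Fintype.bijective_iff_injective_and_card]
  refine ⟨?_, by simp [ZMod.card]⟩
  intro a b hab
  simp only at hab
  rw [(isCycleOn h).pow_apply_eq_pow_apply (Finset.mem_univ i), Finset.card_univ,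
    Fintype.card_fin, ← ZMod.natCast_eq_natCast_iff] at hab
  simpa using hab

lemma not_const {p : ℕ} (hp : p.Prime) (ho : Odd p) {σ : Equiv.Perm (Fin p)} {u : Fin p → Bool}
    (hg : Good σ u) (h : Trans σ) : ¬ ∃ c, u = fun _ => c := by
  rintro ⟨c, rfl⟩
  obtain ⟨_, hf, ht⟩ := hg
  have hm : StrictMono (fun x => σ (σ x)) := by
    intro x y hxy
    cases c with
    | false => exact hf _ _ rfl rfl (hf _ _ rfl rfl hxy)
    | true => exact ht _ _ rfl rfl (ht _ _ rfl rfl hxy)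
  have := strictMono_eq _ hm ⟨0, hp.pos⟩
  have h2 : (σ ^ 2) ⟨0, hp.pos⟩ = ⟨0, hp.pos⟩ := by rw [pow_two]; exact this
  rw [(isCycleOn h).pow_apply_eq (Finset.mem_univ _), Finset.card_univ, Fintype.card_fin,
    Nat.prime_dvd_prime_iff_eq hp Nat.prime_two] at h2
  subst h2
  exact absurd ho (by decide)

abbrev GT (p : ℕ) := {x : Equiv.Perm (Fin p) × (Fin p → Bool) // Good x.1 x.2 ∧ Trans x.1}

def Phi {p : ℕ} [Fact p.Prime] (ho : Odd p) (x : GT p × Fin p) :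
    {w : ZMod p → Bool // ¬ ∃ c, w = fun _ => c} :=
  ⟨fun a => x.1.1.2 ((x.1.1.1 ^ a.val) x.2), by
    rintro ⟨c, hc⟩
    apply not_const Fact.out ho x.1.2.1 x.1.2.2
    refine ⟨c, funext fun y => ?_⟩
    obtain ⟨a, rfl⟩ := (orbit_bij x.1.2.2 x.2).2 y
    exact congrFun hc a⟩

lemma Phi_inj {p : ℕ} [Fact p.Prime] (ho : Odd p) : Function.Injective (Phi (p := p) ho) := by
  rintro ⟨⟨⟨σ, u⟩, hg, ht⟩, i⟩ ⟨⟨⟨τ, v⟩, hg', ht'⟩, j⟩ h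
  have hw := (Phi ho (⟨⟨⟨σ, u⟩, hg, ht⟩, i⟩ : GT p × Fin p)).2
  have hwe := congrArg Subtype.val h
  simp only [Phi] at hw hwe
  simp only at hg ht hg' ht'
  have he := orbit_succ ht i
  have he' := orbit_succ ht' j
  have hb := orbit_bij ht i
  have hb' := orbit_bij ht' j
  have hi : (σ ^ (0 : ZMod p).val) i = i := by simp
  have hj : (τ ^ (0 : ZMod p).val) j = j := by simp
  generalize hE : (fun a : ZMod p => (σ ^ a.val) i) = e at *
  generalize hE' : (fun a : ZMod p => (τ ^ a.val) j) = e' at *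
  have hEa : ∀ a : ZMod p, (σ ^ a.val) i = e a := fun a => congrFun hE a
  have hEa' : ∀ a : ZMod p, (τ ^ a.val) j = e' a := fun a => congrFun hE' a
  simp only [hEa, hEa'] at *
  have hmono : ∀ a b, e a < e b → e' a < e' b := by
    intro a b hab
    have hne : a ≠ b := by rintro rfl; exact lt_irrefl _ hab
    rcases klt_total hw hne with ⟨n, h1, h2⟩ | ⟨n, h1, h2⟩
    · rw [hwe] at h1 h2
      exact klt_imp hg' he' n a b h1 h2
    · exact absurd (klt_imp hg he n b a h1 h2) (not_lt.mpr hab.le)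
  let E := Equiv.ofBijective e hb
  have heq : ∀ a, e' a = e a := by
    have := strictMono_eq (fun x => e' (E.symm x)) (by
      intro x y hxy
      apply hmono
      have hx : e (E.symm x) = x := E.apply_symm_apply x
      have hy : e (E.symm y) = y := E.apply_symm_apply y
      rwa [hx, hy])
    intro a
    have := this (e a)
    have hx : E.symm (e a) = a := E.symm_apply_apply a
    simpa [hx] using this
  have h1 : i = j := by rw [← hi, ← hj, heq]
  have h2 : σ = τ := by
    ext1 x
    obtain ⟨a, rfl⟩ := hb.2 x
    rw [← he, ← heq a, ← he', heq]
  have h3 : u = v := by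
    ext1 x
    obtain ⟨a, rfl⟩ := hb.2 x
    rw [congrFun hwe a, heq]
  subst h1 h2 h3
  rfl

lemma Phi_surj {p : ℕ} [Fact p.Prime] (ho : Odd p) : Function.Surjective (Phi (p := p) ho) := by
  rintro ⟨w, hw⟩
  obtain ⟨e, he⟩ := exists_equiv hw
  let σ : Equiv.Perm (Fin p) := (e.symm.trans (Equiv.addRight 1)).trans e
  have hσ : ∀ a, σ (e a) = e (a + 1) := by intro a; simp [σ]
  have hpow : ∀ (k : ℕ) a, (σ ^ k) (e a) = e (a + k) := by
    intro k
    induction k with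
    | zero => simp
    | succ k ih =>
      intro a
      rw [pow_succ', Equiv.Perm.mul_apply, ih, hσ]
      push_cast
      rw [add_assoc]
  have ht : Trans σ := by
    intro x y
    obtain ⟨a, rfl⟩ := e.surjective x
    obtain ⟨b, rfl⟩ := e.surjective y
    refine ⟨(b - a).val, ?_⟩
    rw [hpow]
    simp
  have hfin : ∀ {a b}, (e a < e b → False) → a ≠ b → e b < e a := by
    intro a b h hne
    exact lt_of_le_of_ne (not_lt.mp h) (fun h => hne (e.injective h.symm))
  have hg : Good σ (fun x => w (e.symm x)) := by
    refine ⟨?_, ?_, ?_⟩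
    · intro x y hxy
      obtain ⟨a, rfl⟩ := e.surjective x
      obtain ⟨b, rfl⟩ := e.surjective y
      simp only [Equiv.symm_apply_apply]
      by_contra hc
      rw [not_le, Bool.lt_iff] at hc
      exact absurd ((he _ _).2 (klt_of hc.1 hc.2)) (not_lt.mpr hxy)
    · intro x y hx hy hxy
      obtain ⟨a, rfl⟩ := e.surjective x
      obtain ⟨b, rfl⟩ := e.surjective y
      simp only [Equiv.symm_apply_apply] at hx hy
      rw [hσ, hσ]
      refine hfin (fun h => ?_) ?_
      · exact absurd ((he _ _).2 (klt_shift_false hy hx ((he _ _).1 h))) (not_lt.mpr hxy.le)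
      · intro h
        rw [add_right_cancel h] at hxy
        exact lt_irrefl _ hxy
    · intro x y hx hy hxy
      obtain ⟨a, rfl⟩ := e.surjective x
      obtain ⟨b, rfl⟩ := e.surjective y
      simp only [Equiv.symm_apply_apply] at hx hy
      rw [hσ, hσ]
      refine hfin (fun h => ?_) ?_
      · exact absurd ((he _ _).2 (klt_shift_true hx hy ((he _ _).1 h))) (not_lt.mpr hxy.le)
      · intro h
        rw [add_right_cancel h] at hxy
        exact lt_irrefl _ hxy
  refine ⟨⟨⟨⟨σ, fun x => w (e.symm x)⟩, hg, ht⟩, e 0⟩, ?_⟩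
  apply Subtype.ext
  funext a
  simp [Phi, hpow]

/-- the two admissible labellings of a permutation with peak `m`. -/
def lab {p : ℕ} (m : Fin p) (b : Bool) (j : Fin p) : Bool :=
  if j = m then b else decide (m < j)

lemma good_lab {p : ℕ} {σ : Equiv.Perm (Fin p)} {m : Fin p}
    (h1 : StrictMonoOn σ {i | i ≤ m}) (h2 : StrictAntiOn σ {i | m ≤ i}) (b : Bool) :
    Good σ (lab m b) := by
  have hle : ∀ x, lab m b x = false → x ≤ m := by
    intro x hx
    unfold lab at hx
    split_ifs at hx with h
    · exact h.le
    · simpa using hx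
  have hge : ∀ x, lab m b x = true → m ≤ x := by
    intro x hx
    unfold lab at hx
    split_ifs at hx with h
    · exact h.ge
    · exact le_of_lt (by simpa using hx)
  refine ⟨?_, ?_, ?_⟩
  · intro x y hxy
    by_contra hc
    rw [not_le, Bool.lt_iff] at hc
    have ha := hle _ hc.1
    have hb := hge _ hc.2
    have hx : x = m := le_antisymm (hxy.trans ha) hb
    have hy : y = m := le_antisymm ha (hb.trans hxy)
    subst hx
    subst hy
    simp [hc.2] at hc
  · intro x y hx hy hxy
    exact h1 (hle x hx) (hle y hy) hxy
  · intro x y hx hy hxy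
    exact h2 (hge x hx) (hge y hy) hxy

lemma peak_max {p : ℕ} {σ : Equiv.Perm (Fin p)} {m : Fin p}
    (h1 : StrictMonoOn σ {i | i ≤ m}) (h2 : StrictAntiOn σ {i | m ≤ i}) (x : Fin p) :
    σ x ≤ σ m := by
  rcases le_total x m with h | h
  · exact h1.monotoneOn h (le_refl m) h
  · exact h2.antitoneOn (le_refl m) h h

lemma good_unimodal {p : ℕ} {σ : Equiv.Perm (Fin p)} {u : Fin p → Bool} (hg : Good σ u)
    {m : Fin p} (hm : ∀ x, σ x ≤ σ m) :
    (StrictMonoOn σ {i | i ≤ m} ∧ StrictAntiOn σ {i | m ≤ i}) ∧ u = lab m (u m) := by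
  obtain ⟨hu, hf, ht⟩ := hg
  have hlt : ∀ j, j < m → u j = false := by
    intro j hj
    by_contra hc
    rw [Bool.not_eq_false] at hc
    have : u m = true := by
      have := hu hj.le
      rw [hc] at this
      exact top_le_iff.mp this
    exact absurd (ht _ _ hc this hj) (not_lt.mpr (hm j))
  have hgt : ∀ j, m < j → u j = true := by
    intro j hj
    by_contra hc
    rw [Bool.not_eq_true] at hc
    have : u m = false := by
      have := hu hj.le
      rw [hc] at this
      exact le_bot_iff.mp this
    exact absurd (hf _ _ this hc hj) (not_lt.mpr (hm j))
  have hmax : ∀ x, x ≠ m → σ x < σ m := fun x hx =>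
    lt_of_le_of_ne (hm x) (fun h => hx (σ.injective h))
  refine ⟨⟨?_, ?_⟩, ?_⟩
  · intro x _ y hy hxy
    rcases (show y ≤ m from hy).lt_or_eq with h | h
    · exact hf _ _ (hlt _ (hxy.trans h)) (hlt _ h) hxy
    · subst h; exact hmax _ hxy.ne
  · intro x hx y _ hxy
    rcases (show m ≤ x from hx).lt_or_eq with h | h
    · exact ht _ _ (hgt _ h) (hgt _ (h.trans hxy)) hxy
    · subst h; exact hmax _ hxy.ne'
  · funext j
    unfold lab
    split_ifs with h
    · rw [h]
    · rcases lt_or_gt_of_ne h with h | h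
      · simp [hlt j h, h.le]
      · simp [hgt j h, h]

noncomputable def Psi {p : ℕ} (x : {σ : Equiv.Perm (Fin p) // Unimodal σ ∧ Trans σ} × Bool) :
    GT p :=
  ⟨⟨x.1.1, lab x.1.2.1.choose x.2⟩,
    good_lab x.1.2.1.choose_spec.1 x.1.2.1.choose_spec.2 _, x.1.2.2⟩

lemma Psi_bij {p : ℕ} (hp : 0 < p) : Function.Bijective (Psi (p := p)) := by
  constructor
  · rintro ⟨⟨σ, h⟩, b⟩ ⟨⟨τ, h'⟩, b'⟩ hh
    have hh := congrArg Subtype.val hh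
    simp only [Psi, Prod.mk.injEq] at hh
    obtain ⟨rfl, h2⟩ := hh
    have := congrFun h2 h.1.choose
    simp [lab] at this
    subst this
    rfl
  · rintro ⟨⟨σ, u⟩, hg, ht⟩
    have : Nonempty (Fin p) := ⟨⟨0, hp⟩⟩
    obtain ⟨m, hm⟩ := Finite.exists_max σ
    have hU : Unimodal σ := ⟨m, (good_unimodal hg hm).1⟩
    have hc := (good_unimodal hg (peak_max hU.choose_spec.1 hU.choose_spec.2)).2
    refine ⟨⟨⟨σ, hU, ht⟩, u hU.choose⟩, ?_⟩
    apply Subtype.ext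
    exact Prod.ext rfl hc.symm

lemma card_words (p : ℕ) [Fact p.Prime] :
    Nat.card {w : ZMod p → Bool // ¬ ∃ c, w = fun _ => c} + 2 = 2 ^ p := by
  classical
  rw [Nat.card_eq_fintype_card, Fintype.card_subtype_compl]
  have h : Fintype.card {w : ZMod p → Bool // ∃ c, w = fun _ => c} = 2 := by
    rw [← Fintype.card_bool]
    symm
    apply Fintype.card_of_bijective
      (f := fun c : Bool => (⟨fun _ => c, c, rfl⟩ : {w : ZMod p → Bool // ∃ c, w = fun _ => c}))
    constructor
    · intro a b h
      exact congrFun (congrArg Subtype.val h) 0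
    · rintro ⟨_, c, rfl⟩
      exact ⟨c, rfl⟩
  have h2 := Fintype.card_subtype_le (fun w : ZMod p → Bool => ∃ c, w = fun _ => c)
  rw [h] at h2 ⊢
  rw [Nat.sub_add_cancel h2]
  simp [ZMod.card]

lemma main_count {p : ℕ} (hp : p.Prime) (ho : Odd p) :
    Nat.card {σ : Equiv.Perm (Fin p) // Unimodal σ ∧ Trans σ} * 2 * p + 2 = 2 ^ p := by
  haveI : Fact p.Prime := ⟨hp⟩
  have h1 := Nat.card_eq_of_bijective _ (Psi_bij hp.pos)
  have h2 := Nat.card_eq_of_bijective _ ⟨Phi_inj (p := p) ho, Phi_surj ho⟩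
  rw [Nat.card_prod] at h1 h2
  rw [← h1] at h2
  simp only [Nat.card_eq_fintype_card (α := Bool), Fintype.card_bool,
    Nat.card_eq_fintype_card (α := Fin p), Fintype.card_fin] at h2
  rw [h2, card_words]

end UnimodalCount

/-- For a prime `p`, the number of transitive unimodal permutations of
`{1,…,p}` is `1` if `p = 2` and `(2^(p-1) - 1)/p` if `p` is odd. -/
theorem card_transitive_unimodal_prime (p : ℕ) (hp : p.Prime) :
    (p = 2 → Nat.card {σ : Equiv.Perm (Fin p) //
        Unimodal σ ∧ ∀ i j : Fin p, ∃ k : ℕ, (σ ^ k) i = j} = 1) ∧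
    (Odd p → (Nat.card {σ : Equiv.Perm (Fin p) //
        Unimodal σ ∧ ∀ i j : Fin p, ∃ k : ℕ, (σ ^ k) i = j} : ℤ) * p =
        2 ^ (p - 1) - 1) := by
  constructor
  · rintro rfl
    rw [Nat.card_eq_one_iff_exists]
    refine ⟨⟨Equiv.swap 0 1, ⟨0, ?_, ?_⟩, ?_⟩, ?_⟩
    · intro x hx y hy hxy
      simp only [Set.mem_setOf_eq] at hx hy
      exact absurd hxy (by omega)
    · intro x hx y hy hxy
      clear hx hy
      revert x y
      decide
    · intro i j
      by_cases h : i = j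
      · exact ⟨0, by simpa using h⟩
      · refine ⟨1, ?_⟩
        revert i j
        decide
    · rintro ⟨σ, _, ht⟩
      apply Subtype.ext
      have : ∀ σ : Equiv.Perm (Fin 2), σ = 1 ∨ σ = Equiv.swap 0 1 := by decide
      rcases this σ with rfl | h
      · obtain ⟨k, hk⟩ := ht 0 1
        simp at hk
      · exact h
  · intro ho
    have h := UnimodalCount.main_count hp ho
    have h' : (Nat.card {σ : Equiv.Perm (Fin p) //
        Unimodal σ ∧ ∀ i j : Fin p, ∃ k : ℕ, (σ ^ k) i = j}) * 2 * p + 2 = 2 ^ p := h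
    clear h
    generalize Nat.card {σ : Equiv.Perm (Fin p) //
        Unimodal σ ∧ ∀ i j : Fin p, ∃ k : ℕ, (σ ^ k) i = j} = c at h' ⊢
    have hp1 : (2 : ℤ) ^ p = 2 * 2 ^ (p - 1) := by
      rw [← pow_succ', Nat.sub_add_cancel hp.one_le]
    have h'' := congrArg (fun n : ℕ => (n : ℤ)) h'
    push_cast at h''
    rw [hp1] at h''
    linarith
end
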